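/- arXiv:2203.07346 — 2 statements merged into one kernel-verified Lean document; each statement's English description precedes it below -/
import Mathlib

section
/- Let G = (V,H) be a finite q-uniform hypergraph (q ≥ 2) with |V| = n and |H| = m, B its non-backtracking matrix, A its adjacency matrix, D its degree matrix, and B̃ the 2n × 2n block matrix [[0, D − I_n],[−(q−1)I_n, A − (q−2)I_n]]. Then: (1) for every λ ∈ ℂ with λ ∉ {1, −(q−1)}, λ is an eigenvalue of B if and only if λ is an eigenvalue of B̃; (2) if m ≥ n, then 1 is an eigenvalue of B with algebraic multiplicity at least (q−1)m − n, and −(q−1) is an eigenvalue of B with algebraic multiplicity at least m − n. -/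
open scoped BigOperators Matrix

namespace HypergraphNB

variable {n : ℕ}

/-- The type of oriented hyperedges `v → e` of a hypergraph with hyperedge set `H`. -/
def OEdge (H : Finset (Finset (Fin n))) : Type _ :=
  {a : Fin n × Finset (Fin n) // a.2 ∈ H ∧ a.1 ∈ a.2}

noncomputable instance (H : Finset (Finset (Fin n))) : Fintype (OEdge H) := by
  unfold OEdge; infer_instance

instance (H : Finset (Finset (Fin n))) : DecidableEq (OEdge H) := by
  unfold OEdge; exact Subtype.instDecidableEq

/-- The non-backtracking matrix `B` (over `ℂ`). -/
def nbMatrix (H : Finset (Finset (Fin n))) : Matrix (OEdge H) (OEdge H) ℂ :=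
  fun a b => if b.1.1 ∈ a.1.2 ∧ b.1.1 ≠ a.1.1 ∧ b.1.2 ≠ a.1.2 then 1 else 0

/-- The adjacency matrix `A` (over `ℂ`). -/
def adjMatrix (H : Finset (Finset (Fin n))) : Matrix (Fin n) (Fin n) ℂ :=
  fun i j => if i ≠ j then ((H.filter (fun e => i ∈ e ∧ j ∈ e)).card : ℂ) else 0

/-- The diagonal degree matrix `D` (over `ℂ`). -/
def degMatrix (H : Finset (Finset (Fin n))) : Matrix (Fin n) (Fin n) ℂ :=
  Matrix.diagonal (fun i => ((H.filter (fun e => i ∈ e)).card : ℂ))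

/-- The reduced `2n × 2n` matrix `B̃ = [[0, D − I], [−(q−1)I, A − (q−2)I]]`. -/
def redMatrix (q : ℕ) (H : Finset (Finset (Fin n))) :
    Matrix (Fin n ⊕ Fin n) (Fin n ⊕ Fin n) ℂ :=
  Matrix.fromBlocks 0 (degMatrix H - 1)
    (-(((q : ℂ) - 1) • (1 : Matrix (Fin n) (Fin n) ℂ)))
    (adjMatrix H - ((q : ℂ) - 2) • (1 : Matrix (Fin n) (Fin n) ℂ))

/-- `λ` is an eigenvalue of the square matrix `M` iff `det(M − λI) = 0`. -/
def IsEigenvalue {I : Type*} [Fintype I] [DecidableEq I]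
    (M : Matrix I I ℂ) (lam : ℂ) : Prop :=
  (M - lam • (1 : Matrix I I ℂ)).det = 0

/-- Vertex part: `T v a = [v = source of a]`. -/
noncomputable def mT (H : Finset (Finset (Fin n))) : Matrix (Fin n) (OEdge H) ℂ :=
  fun v a => if a.1.1 = v then 1 else 0

/-- Hyperedge part. -/
noncomputable def mP (H : Finset (Finset (Fin n))) : Matrix (OEdge H) {e // e ∈ H} ℂ :=
  fun a e => if a.1.2 = e.1 then 1 else 0

/-- Incidence matrix. -/
noncomputable def mR (H : Finset (Finset (Fin n))) : Matrix {e // e ∈ H} (Fin n) ℂ :=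
  fun e v => if v ∈ e.1 then 1 else 0

theorem sum_oedge {M : Type*} [AddCommMonoid M] (H : Finset (Finset (Fin n)))
    (f : Fin n → Finset (Fin n) → M) :
    ∑ a : OEdge H, f a.1.1 a.1.2 = ∑ e : {e // e ∈ H}, ∑ v ∈ e.1, f v e.1 := by
  rw [Finset.sum_sigma']
  refine Finset.sum_bij (fun a _ => ⟨⟨a.1.2, a.2.1⟩, a.1.1⟩) ?_ ?_ ?_ ?_
  · intro a _
    simpa using a.2.2
  · rintro ⟨⟨u, e⟩, h⟩ _ ⟨⟨v, f⟩, h'⟩ _ hh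
    simp only [Sigma.mk.injEq, Subtype.mk.injEq, heq_eq_eq] at hh
    obtain ⟨rfl, rfl⟩ := hh
    rfl
  · rintro ⟨⟨e, he⟩, v⟩ hv
    exact ⟨⟨(v, e), he, by simpa using hv⟩, Finset.mem_univ _, rfl⟩
  · intro a _
    rfl

theorem card_oedge (q : ℕ) (H : Finset (Finset (Fin n)))
    (huniform : ∀ e ∈ H, e.card = q) : Fintype.card (OEdge H) = q * H.card := by
  have h := sum_oedge H (fun _ _ => (1 : ℕ))
  simp only [Finset.sum_const, smul_eq_mul, mul_one, Finset.card_univ] at h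
  rw [h, Finset.sum_congr rfl (fun e _ => huniform e.1 e.2)]
  simp [mul_comm]

theorem TP (H : Finset (Finset (Fin n))) : mT H * mP H = (mR H)ᵀ := by
  ext v e
  rw [Matrix.mul_apply]
  simp only [mT, mP, mR, Matrix.transpose_apply]
  rw [sum_oedge H (fun x y => (if x = v then (1 : ℂ) else 0) * (if y = e.1 then 1 else 0))]
  simp only [← Finset.sum_mul, Finset.sum_ite_eq']
  rw [Finset.sum_eq_single e]
  · simp
  · intro b _ hb
    have : b.1 ≠ e.1 := fun h => hb (Subtype.ext h)
    simp [this]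
  · simp

theorem TT (H : Finset (Finset (Fin n))) : mT H * (mT H)ᵀ = degMatrix H := by
  ext v w
  rw [Matrix.mul_apply]
  simp only [mT, Matrix.transpose_apply, degMatrix, Matrix.diagonal_apply]
  rw [sum_oedge H (fun x _ => (if x = v then (1 : ℂ) else 0) * (if x = w then 1 else 0))]
  simp only [ite_mul, one_mul, zero_mul, Finset.sum_ite_eq']
  by_cases h : v = w
  · subst h
    simp only [if_true]
    rw [Finset.sum_coe_sort H (fun e => if v ∈ e then (1 : ℂ) else 0)]
    simp
  · simp [h]

theorem PP (q : ℕ) (H : Finset (Finset (Fin n)))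
    (huniform : ∀ e ∈ H, e.card = q) : (mP H)ᵀ * mP H = (q : ℂ) • 1 := by
  ext e f
  rw [Matrix.mul_apply]
  simp only [mP, Matrix.transpose_apply, Matrix.smul_apply, Matrix.one_apply]
  rw [sum_oedge H (fun _ y => (if y = e.1 then (1 : ℂ) else 0) * (if y = f.1 then 1 else 0))]
  simp only [Finset.sum_const]
  rw [Finset.sum_eq_single e]
  · by_cases h : e = f
    · subst h
      simp [huniform e.1 e.2]
    · have : e.1 ≠ f.1 := fun h' => h (Subtype.ext h')
      simp [h, this]
  · intro b _ hb
    have : b.1 ≠ e.1 := fun h => hb (Subtype.ext h)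
    simp [this]
  · simp

theorem RR (H : Finset (Finset (Fin n))) :
    (mR H)ᵀ * mR H = adjMatrix H + degMatrix H := by
  ext v w
  rw [Matrix.mul_apply]
  simp only [mR, Matrix.transpose_apply, Matrix.add_apply, adjMatrix, degMatrix,
    Matrix.diagonal_apply]
  rw [Finset.sum_coe_sort H
    (fun e => (if v ∈ e then (1 : ℂ) else 0) * (if w ∈ e then (1 : ℂ) else 0))]
  by_cases h : v = w
  · subst h
    have : ∀ e : Finset (Fin n), (if v ∈ e then (1 : ℂ) else 0) * (if v ∈ e then (1 : ℂ) else 0)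
        = if v ∈ e then 1 else 0 := by
      intro e
      split_ifs <;> simp
    simp only [this]
    simp
  · simp [h, ← ite_and, and_comm]

theorem B_eq (H : Finset (Finset (Fin n))) :
    nbMatrix H = 1 + (mP H * (mR H * mT H - (mP H)ᵀ) + (mT H)ᵀ * (-mT H)) := by
  have h1 : ∀ a b, (mP H * mR H * mT H) a b = if b.1.1 ∈ a.1.2 then 1 else 0 := by
    intro a b
    have h2 : ∀ v, (mP H * mR H) a v = if v ∈ a.1.2 then 1 else 0 := by
      intro v
      rw [Matrix.mul_apply]
      simp only [mP, mR]
      rw [Finset.sum_eq_single ⟨a.1.2, a.2.1⟩]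
      · simp
      · intro e _ he
        have : a.1.2 ≠ e.1 := fun h => he (Subtype.ext h.symm)
        simp [this]
      · simp
    rw [Matrix.mul_apply]
    simp only [h2, mT]
    simp
  have h3 : ∀ a b, (mP H * (mP H)ᵀ) a b = if a.1.2 = b.1.2 then 1 else 0 := by
    intro a b
    rw [Matrix.mul_apply]
    simp only [mP, Matrix.transpose_apply]
    rw [Finset.sum_eq_single ⟨a.1.2, a.2.1⟩]
    · simp [eq_comm]
    · intro e _ he
      have : a.1.2 ≠ e.1 := fun h => he (Subtype.ext h.symm)
      simp [this]
    · simp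
  have h4 : ∀ a b, ((mT H)ᵀ * mT H) a b = if a.1.1 = b.1.1 then 1 else 0 := by
    intro a b
    rw [Matrix.mul_apply]
    simp [mT, Matrix.transpose_apply, eq_comm]
  rw [Matrix.mul_sub, ← Matrix.mul_assoc, Matrix.mul_neg]
  ext a b
  simp only [Matrix.add_apply, Matrix.sub_apply, Matrix.neg_apply, h1, h3, h4, Matrix.one_apply,
    nbMatrix]
  have hab : a = b ↔ a.1.1 = b.1.1 ∧ a.1.2 = b.1.2 := by
    rw [← Prod.ext_iff]
    exact Subtype.ext_iff
  have ha := a.2.2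
  have hb := b.2.2
  by_cases c1 : a.1.1 = b.1.1 <;> by_cases c2 : a.1.2 = b.1.2
  · have : b.1.1 ∈ a.1.2 := c1 ▸ ha
    simp [hab, c1, c2, hb]
  · have : b.1.1 ∈ a.1.2 := c1 ▸ ha
    simp [hab, c1, c2, this]
  · have : b.1.1 ∈ a.1.2 := c2 ▸ hb
    simp [hab, c1, c2, hb]
  · simp [hab, c1, c2, Ne.symm c1, Ne.symm c2, Ne]

/-- Reduced determinant common to both sides. -/
noncomputable def core (q : ℕ) (H : Finset (Finset (Fin n))) (x : ℂ) :
    Matrix (Fin n) (Fin n) ℂ :=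
  ((x - 1 + q) * (x - 1)) • 1 + ((q : ℂ) - 1) • degMatrix H - x • adjMatrix H

theorem red_det (q : ℕ) (H : Finset (Finset (Fin n))) (x : ℂ) (hx : x ≠ 0) :
    (redMatrix q H).charpoly.eval x = (core q H x).det := by
  rw [Matrix.eval_charpoly]
  have h : (Matrix.scalar _ x - redMatrix q H) *
      Matrix.fromBlocks 1 (degMatrix H - 1) 0 (x • 1) =
      Matrix.fromBlocks (x • 1) 0 (((q : ℂ) - 1) • 1) (core q H x) := by
    have hs : Matrix.scalar (Fin n ⊕ Fin n) x =
      Matrix.fromBlocks (x • 1) 0 0 (x • (1 : Matrix (Fin n) (Fin n) ℂ)) := by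
      rw [← smul_zero x, ← Matrix.fromBlocks_smul, Matrix.fromBlocks_one]
      simp [Matrix.smul_one_eq_diagonal]
    rw [hs, redMatrix, sub_eq_add_neg, Matrix.fromBlocks_neg, Matrix.fromBlocks_add,
      Matrix.fromBlocks_multiply]
    congr 1
    · simp
    · simp
      module
    · simp
    · simp [core]
      module
  have h2 := congrArg Matrix.det h
  rw [Matrix.det_mul, Matrix.det_fromBlocks_zero₂₁, Matrix.det_fromBlocks_zero₁₂] at h2
  simp only [Matrix.det_one, one_mul, Matrix.det_smul, mul_one] at h2
  rw [mul_comm] at h2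
  exact mul_left_cancel₀ (pow_ne_zero _ hx) h2

theorem nb_det (q : ℕ) (H : Finset (Finset (Fin n)))
    (huniform : ∀ e ∈ H, e.card = q) (x : ℂ) :
    (x - 1) ^ (H.card + n) * (x - 1 + q) ^ n * (nbMatrix H).charpoly.eval x =
      (x - 1) ^ (q * H.card) * (x - 1 + q) ^ H.card * (core q H x).det := by
  set U : Matrix (OEdge H) ({e // e ∈ H} ⊕ Fin n) ℂ := Matrix.fromCols (mP H) (mT H)ᵀ with hU
  set W : Matrix ({e // e ∈ H} ⊕ Fin n) (OEdge H) ℂ :=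
    Matrix.fromRows (mR H * mT H - (mP H)ᵀ) (-mT H) with hW
  have hB : nbMatrix H = 1 + U * W := by
    rw [B_eq, hU, hW, Matrix.fromCols_mul_fromRows]
  have e1 : (nbMatrix H).charpoly.eval x = (U * W).charpoly.eval (x - 1) := by
    rw [Matrix.eval_charpoly, Matrix.eval_charpoly, hB, map_sub, map_one]
    congr 1
    abel
  have e2 := congrArg (Polynomial.eval (x - 1)) (Matrix.charpoly_mul_comm' U W)
  simp only [Polynomial.eval_mul, Polynomial.eval_pow, Polynomial.eval_X, Fintype.card_sum,
    Fintype.card_coe, Fintype.card_fin, card_oedge q H huniform] at e2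
  have hPT : (mP H)ᵀ * (mT H)ᵀ = mR H := by
    rw [← Matrix.transpose_mul, TP, Matrix.transpose_transpose]
  have hWU : W * U = Matrix.fromBlocks (mR H * (mR H)ᵀ - (q : ℂ) • 1)
      (mR H * degMatrix H - mR H) (-(mR H)ᵀ) (-degMatrix H) := by
    rw [hW, hU, Matrix.fromRows_mul_fromCols]
    congr 1
    · rw [Matrix.sub_mul, Matrix.mul_assoc, TP, PP q H huniform]
    · rw [Matrix.sub_mul, Matrix.mul_assoc, TT, hPT]
    · rw [Matrix.neg_mul, TP]
    · rw [Matrix.neg_mul, TT]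
  have e3 : (x - 1 + q) ^ n * (W * U).charpoly.eval (x - 1) =
      (x - 1 + q) ^ H.card * (core q H x).det := by
    rw [Matrix.eval_charpoly]
    have hs : Matrix.scalar ({e // e ∈ H} ⊕ Fin n) (x - 1) =
      Matrix.fromBlocks ((x - 1) • (1 : Matrix {e // e ∈ H} {e // e ∈ H} ℂ)) 0 0
        ((x - 1) • (1 : Matrix (Fin n) (Fin n) ℂ)) := by
      have := Matrix.fromBlocks_smul (x - 1) (1 : Matrix {e // e ∈ H} {e // e ∈ H} ℂ) 0 0
        (1 : Matrix (Fin n) (Fin n) ℂ)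
      rw [smul_zero, smul_zero, Matrix.fromBlocks_one] at this
      rw [← this]
      simp [Matrix.smul_one_eq_diagonal]
    have h0 : Matrix.fromBlocks 1 (mR H) 0 1 * (Matrix.scalar _ (x - 1) - W * U) =
        Matrix.fromBlocks ((x - 1 + q) • 1) (x • mR H) (mR H)ᵀ ((x - 1) • 1 + degMatrix H) := by
      rw [hs, hWU, sub_eq_add_neg, Matrix.fromBlocks_neg, Matrix.fromBlocks_add,
        Matrix.fromBlocks_multiply]
      congr 1
      · simp
        module
      · simp [Matrix.mul_add]
        module
      · simp
      · simp
    have h1 : Matrix.fromBlocks 1 (mR H) 0 1 * (Matrix.scalar _ (x - 1) - W * U) *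
        Matrix.fromBlocks 1 (-(x • mR H)) 0 ((x - 1 + q) • 1) =
        Matrix.fromBlocks ((x - 1 + q) • 1) 0 (mR H)ᵀ (core q H x) := by
      rw [h0, Matrix.fromBlocks_multiply]
      congr 1
      · simp
      · simp
        module
      · simp
      · simp [RR, core, smul_smul]
        module
    have h2 := congrArg Matrix.det h1
    rw [Matrix.det_mul, Matrix.det_mul, Matrix.det_fromBlocks_zero₂₁,
      Matrix.det_fromBlocks_zero₂₁, Matrix.det_fromBlocks_zero₁₂] at h2
    simp only [Matrix.det_one, one_mul, Matrix.det_smul, mul_one, Fintype.card_fin,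
      Fintype.card_coe] at h2
    rw [← h2, mul_comm]
  rw [e1]
  linear_combination (x - 1 + q) ^ n * e2 + (x - 1) ^ (q * H.card) * e3

open Polynomial in
theorem poly_id (q : ℕ) (H : Finset (Finset (Fin n)))
    (huniform : ∀ e ∈ H, e.card = q) :
    (nbMatrix H).charpoly * (X - C (-((q : ℂ) - 1))) ^ n * (X - C 1) ^ (H.card + n) =
      (redMatrix q H).charpoly * (X - C (-((q : ℂ) - 1))) ^ H.card * (X - C 1) ^ (q * H.card) := by
  apply Polynomial.eq_of_infinite_eval_eq
  refine (Set.finite_singleton (0 : ℂ)).infinite_compl.mono ?_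
  intro x hx
  have hx : x ≠ 0 := hx
  have h := nb_det q H huniform x
  rw [← red_det q H x hx] at h
  simp only [Set.mem_ofPred_eq, eval_mul, eval_pow, eval_sub, eval_X, eval_C]
  rw [show x - -((q : ℂ) - 1) = x - 1 + q by ring]
  linear_combination h

theorem isEig_iff {I : Type*} [Fintype I] [DecidableEq I] (M : Matrix I I ℂ) (x : ℂ) :
    IsEigenvalue M x ↔ M.charpoly.eval x = 0 := by
  rw [IsEigenvalue, Matrix.eval_charpoly, ← neg_sub, Matrix.det_neg]
  simp [Matrix.smul_one_eq_diagonal]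

/-- For a finite `q`-uniform hypergraph with `n` vertices and `m` hyperedges:
(1) for `λ ∉ {1, −(q−1)}`, `λ` is an eigenvalue of `B` iff it is an eigenvalue of `B̃`;
(2) if `m ≥ n`, then `1` is an eigenvalue of `B` with algebraic multiplicity at least
`(q−1)m − n`, and `−(q−1)` has algebraic multiplicity at least `m − n`. -/
theorem nb_reduced_spectrum (q : ℕ) (hq : 2 ≤ q) (H : Finset (Finset (Fin n)))
    (huniform : ∀ e ∈ H, e.card = q) :
    (∀ lam : ℂ, lam ≠ 1 → lam ≠ -((q : ℂ) - 1) →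
        (IsEigenvalue (nbMatrix H) lam ↔ IsEigenvalue (redMatrix q H) lam)) ∧
    (H.card ≥ n →
        (q - 1) * H.card - n ≤ (Matrix.charpoly (nbMatrix H)).rootMultiplicity 1 ∧
        H.card - n ≤ (Matrix.charpoly (nbMatrix H)).rootMultiplicity (-((q : ℂ) - 1))) := by
  have hp := poly_id q H huniform
  refine ⟨?_, ?_⟩
  · intro x h1 h2
    rw [isEig_iff, isEig_iff]
    have h := congrArg (Polynomial.eval x) hp
    simp only [Polynomial.eval_mul, Polynomial.eval_pow, Polynomial.eval_sub, Polynomial.eval_X,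
      Polynomial.eval_C] at h
    have h1' := sub_ne_zero.2 h1
    have h2' := sub_ne_zero.2 h2
    constructor
    · intro h0
      rw [h0] at h
      rw [zero_mul, zero_mul] at h
      exact (mul_eq_zero.1 ((mul_eq_zero.1 h.symm).resolve_right (pow_ne_zero _ h1'))).resolve_right
        (pow_ne_zero _ h2')
    · intro h0
      rw [h0] at h
      rw [zero_mul, zero_mul] at h
      exact (mul_eq_zero.1 ((mul_eq_zero.1 h).resolve_right (pow_ne_zero _ h1'))).resolve_right
        (pow_ne_zero _ h2')
  · intro _
    have hne : (1 : ℂ) ≠ -((q : ℂ) - 1) := by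
      intro h
      have : (q : ℂ) = 0 := by linear_combination h
      have : q = 0 := by exact_mod_cast this
      omega
    have m1 : (nbMatrix H).charpoly ≠ 0 := (Matrix.charpoly_monic _).ne_zero
    have m2 : (redMatrix q H).charpoly ≠ 0 := (Matrix.charpoly_monic _).ne_zero
    have m3 : ∀ (a : ℂ) (k : ℕ), (Polynomial.X - Polynomial.C a) ^ k ≠ 0 :=
      fun a k => pow_ne_zero _ (Polynomial.X_sub_C_ne_zero a)
    have m4 : ∀ (a b : ℂ) (k : ℕ), a ≠ b →
        ((Polynomial.X - Polynomial.C a) ^ k).rootMultiplicity b = 0 := by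
      intro a b k hab
      apply Polynomial.rootMultiplicity_eq_zero
      simp [Polynomial.IsRoot, sub_eq_zero, hab.symm]
    constructor
    · have h := congrArg (Polynomial.rootMultiplicity 1) hp
      rw [Polynomial.rootMultiplicity_mul_X_sub_C_pow (mul_ne_zero m1 (m3 _ _)),
        Polynomial.rootMultiplicity_mul_X_sub_C_pow (mul_ne_zero m2 (m3 _ _)),
        Polynomial.rootMultiplicity_mul (mul_ne_zero m1 (m3 _ _)), m4 _ _ _ hne.symm] at h
      rw [Nat.sub_mul]
      omega
    · have h := congrArg (Polynomial.rootMultiplicity (-((q : ℂ) - 1))) hp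
      rw [Polynomial.rootMultiplicity_mul (mul_ne_zero (mul_ne_zero m1 (m3 _ _)) (m3 _ _)),
        Polynomial.rootMultiplicity_mul (mul_ne_zero (mul_ne_zero m2 (m3 _ _)) (m3 _ _)),
        Polynomial.rootMultiplicity_mul_X_sub_C_pow m1,
        Polynomial.rootMultiplicity_mul_X_sub_C_pow m2, m4 _ _ _ hne, m4 _ _ _ hne] at h
      omega

end HypergraphNB
end

section
/- Fix q ≥ 3, r ≥ 1, a probability vector π ∈ ℝ^r with Π = diag(π), and a symmetric tensor (p_{i₁,…,i_q}) indexed by [r]^q with nonnegative entries satisfying the degree condition Σ_{j̲ ∈ [r]^{q−1}} p_{i,j̲} ∏_{ℓ ∈ j̲} π_ℓ = d for every i ∈ [r]. Then: (1) for all vectors φ, φ′ ∈ ℝ^r, ⟨π, Q^{(3)}(φ⊗φ′)⟩ = φᵀ Π Q φ′; (2) if φ_i, φ_j are eigenvectors of Q with Qφ_i = μ_i φ_i, Qφ_j = μ_j φ_j and ⟨φ_i, φ_j⟩_π = δ_{ij}, then ⟨π, Q^{(3)}(φ_i⊗φ_j)⟩ = μ_i·δ_{ij}, and for every integer s ≥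 0, ⟨π, Q^s y^{(φ_i,φ_j)}⟩ = (d^{s+1} + (q−2)·d^s·μ_i)·δ_{ij}; (3) consequently, if moreover μ_i ≠ 0 and τ_i := d/((q−1)μ_i²) ≠ 1, then for every integer t ≥ 0, ((q−1)²μ_iμ_j)^t·⟨φ_i,φ_j⟩_π + Σ_{s=0}^{t−1} ((q−1)²μ_iμ_j)^t·((q−1)μ_iμ_j)^{−(s+1)}·⟨π, Q^s y^{(φ_i,φ_j)}⟩ = ((q−1)μ_i)^{2t}·γ_i^{(t)}·δ_{ij}, where γ_i^{(t)} = (1 − τ_i^{t+1})/(1 − τ_i) + ((q−2)/((q−1)μ_i))·(1 − τ_i^{t})/(1 − τ_i). -/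
open scoped BigOperators Matrix

namespace SignalMatrix17

-- Throughout, `q = m + 3` (so `q ≥ 3`); the tensor is `p : (Fin (m+3) → Fin r) → ℝ`.

/-- The signal matrix `Q_{ij} = π_j · Σ_{k̲ ∈ [r]^{q−2}} p_{i,j,k̲} ∏_ℓ π_{k_ℓ}`. -/
noncomputable def Q (m r : ℕ) (π : Fin r → ℝ) (p : (Fin (m + 3) → Fin r) → ℝ) :
    Matrix (Fin r) (Fin r) ℝ :=
  fun i j => π j * ∑ k : Fin (m + 1) → Fin r,
    p (Fin.cons i (Fin.cons j k)) * ∏ t, π (k t)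

/-- The order-3 tensor `Q³_{ijk} = π_j π_k · Σ_{ℓ̲ ∈ [r]^{q−3}} p_{i,j,k,ℓ̲} ∏_m π_{ℓ_m}`. -/
noncomputable def Q3 (m r : ℕ) (π : Fin r → ℝ) (p : (Fin (m + 3) → Fin r) → ℝ)
    (i j k : Fin r) : ℝ :=
  π j * π k * ∑ l : Fin m → Fin r,
    p (Fin.cons i (Fin.cons j (Fin.cons k l))) * ∏ t, π (l t)

/-- `[Q³(φ⊗φ′)](i) = Σ_{j,k} Q³_{ijk} φ(j) φ′(k)`. -/
noncomputable def Q3app (m r : ℕ) (π : Fin r → ℝ) (p : (Fin (m + 3) → Fin r) → ℝ)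
    (φ φ' : Fin r → ℝ) (i : Fin r) : ℝ :=
  ∑ j, ∑ k, Q3 m r π p i j k * φ j * φ' k

/-- `y^{(φ,φ′)} = Q(φ∘φ′) + (q−2)·Q³(φ⊗φ′)`. -/
noncomputable def yVec (m r : ℕ) (π : Fin r → ℝ) (p : (Fin (m + 3) → Fin r) → ℝ)
    (φ φ' : Fin r → ℝ) (i : Fin r) : ℝ :=
  (Q m r π p).mulVec (fun j => φ j * φ' j) i
    + (((m : ℝ) + 3) - 2) * Q3app m r π p φ φ' i

/-- `γ_i^{(t)} = (1 − τ_i^{t+1})/(1 − τ_i) + ((q−2)/((q−1)μ_i))·(1 − τ_i^t)/(1 − τ_i)`. -/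
noncomputable def gamma (m : ℕ) (d μi : ℝ) (t : ℕ) : ℝ :=
  (1 - (d / ((((m : ℝ) + 3) - 1) * μi ^ 2)) ^ (t + 1)) /
      (1 - d / ((((m : ℝ) + 3) - 1) * μi ^ 2)) +
    ((((m : ℝ) + 3) - 2) / ((((m : ℝ) + 3) - 1) * μi)) *
      ((1 - (d / ((((m : ℝ) + 3) - 1) * μi ^ 2)) ^ t) /
        (1 - d / ((((m : ℝ) + 3) - 1) * μi ^ 2)))

theorem aux_swap01 (m r : ℕ) (p : (Fin (m + 3) → Fin r) → ℝ)
    (hsym : ∀ (g : Equiv.Perm (Fin (m + 3))) (f : Fin (m + 3) → Fin r), p (f ∘ g) = p f)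
    (a b : Fin r) (t : Fin (m + 1) → Fin r) :
    p (Fin.cons a (Fin.cons b t)) = p (Fin.cons b (Fin.cons a t)) := by
  rw [← hsym (Equiv.swap 0 1) (Fin.cons b (Fin.cons a t))]
  congr 1
  funext x
  refine Fin.cases ?_ (fun x => Fin.cases ?_ (fun x => ?_) x) x
  · rw [Function.comp_apply, Equiv.swap_apply_left]
    rfl
  · rw [Function.comp_apply, show (Fin.succ (0 : Fin (m + 2))) = 1 from rfl,
      Equiv.swap_apply_right]
    rfl
  · rw [Function.comp_apply, Equiv.swap_apply_of_ne_of_ne (Fin.succ_ne_zero _)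
      (by rw [show (1 : Fin (m + 3)) = Fin.succ 0 from rfl, Ne, Fin.succ_inj]
          exact Fin.succ_ne_zero _)]
    rfl

theorem aux_swap12 (m r : ℕ) (p : (Fin (m + 3) → Fin r) → ℝ)
    (hsym : ∀ (g : Equiv.Perm (Fin (m + 3))) (f : Fin (m + 3) → Fin r), p (f ∘ g) = p f)
    (c a b : Fin r) (t : Fin m → Fin r) :
    p (Fin.cons c (Fin.cons a (Fin.cons b t))) = p (Fin.cons c (Fin.cons b (Fin.cons a t))) := by
  rw [← hsym (Equiv.swap 1 2) (Fin.cons c (Fin.cons b (Fin.cons a t)))]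
  congr 1
  funext x
  refine Fin.cases ?_ (fun x => Fin.cases ?_ (fun x => Fin.cases ?_ (fun x => ?_) x) x) x
  · rw [Function.comp_apply, Equiv.swap_apply_of_ne_of_ne]
    · rfl
    · exact (Fin.succ_ne_zero (0 : Fin (m + 2))).symm
    · exact (Fin.succ_ne_zero (1 : Fin (m + 2))).symm
  · rw [Function.comp_apply, show (Fin.succ (0 : Fin (m + 2))) = 1 from rfl,
      Equiv.swap_apply_left]
    rfl
  · rw [Function.comp_apply, show (Fin.succ (Fin.succ (0 : Fin (m + 1)))) = 2 from rfl,
      Equiv.swap_apply_right]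
    rfl
  · rw [Function.comp_apply, Equiv.swap_apply_of_ne_of_ne]
    · rfl
    · rw [show (1 : Fin (m + 3)) = Fin.succ 0 from rfl, Ne, Fin.succ_inj]
      exact Fin.succ_ne_zero _
    · rw [show (2 : Fin (m + 3)) = Fin.succ (Fin.succ 0) from rfl, Ne, Fin.succ_inj, Fin.succ_inj]
      exact Fin.succ_ne_zero _

theorem aux_sum_cons (n r : ℕ) (π : Fin r → ℝ) (F : (Fin (n + 1) → Fin r) → ℝ) :
    ∑ k : Fin (n + 1) → Fin r, F k * ∏ t, π (k t) =
      ∑ i, π i * ∑ l : Fin n → Fin r, F (Fin.cons i l) * ∏ t, π (l t) := by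
  rw [← (Fin.consEquiv (fun _ : Fin (n + 1) => Fin r)).sum_comp, Fintype.sum_prod_type]
  refine Finset.sum_congr rfl fun i _ => ?_
  rw [Finset.mul_sum]
  refine Finset.sum_congr rfl fun l _ => ?_
  change F (Fin.cons i l) * ∏ t, π ((Fin.cons i l : Fin (n + 1) → Fin r) t) = _
  simp only [Fin.prod_univ_succ, Fin.cons_zero, Fin.cons_succ]
  ring

theorem aux_geom (a M d c : ℝ) (ha : a ≠ 0) (hM : M ≠ 0) (hτ : d / (a * M ^ 2) ≠ 1) (t : ℕ) :
    1 + ∑ s ∈ Finset.range t, ((a * M * M) ^ (s + 1))⁻¹ * (d ^ (s + 1) + c * d ^ s * M) =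
      (1 - (d / (a * M ^ 2)) ^ (t + 1)) / (1 - d / (a * M ^ 2)) +
        (c / (a * M)) * ((1 - (d / (a * M ^ 2)) ^ t) / (1 - d / (a * M ^ 2))) := by
  have key : ∀ s : ℕ, ((a * M * M) ^ (s + 1))⁻¹ * (d ^ (s + 1) + c * d ^ s * M) =
      (d / (a * M ^ 2)) ^ (s + 1) + c / (a * M) * (d / (a * M ^ 2)) ^ s := by
    intro s
    rw [div_pow, div_pow]
    field_simp
    ring
  simp only [key]
  generalize d / (a * M ^ 2) = τ at *
  have h1 : (1 - τ) ≠ 0 := sub_ne_zero.mpr (Ne.symm hτ)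
  induction t with
  | zero => simp [h1]
  | succ n ih =>
    rw [Finset.sum_range_succ, ← add_assoc, ih]
    generalize c / (a * M) = e
    field_simp
    ring

/-- Identities for `⟨π, Q³(φ⊗φ′)⟩`, `⟨π, Qˢ y^{(φ_i,φ_j)}⟩`, and the
resulting closed form `((q−1)μ_i)^{2t} γ_i^{(t)} δ_{ij}`. -/
theorem pi_functionals (m r : ℕ) (hr : 1 ≤ r)
    (π : Fin r → ℝ) (hπ : ∀ k, 0 ≤ π k) (hπ1 : ∑ k, π k = 1)
    (p : (Fin (m + 3) → Fin r) → ℝ) (hp : ∀ f, 0 ≤ p f)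
    (hsym : ∀ (g : Equiv.Perm (Fin (m + 3))) (f : Fin (m + 3) → Fin r), p (f ∘ g) = p f)
    (d : ℝ)
    (hdeg : ∀ i : Fin r,
      ∑ j : Fin (m + 2) → Fin r, p (Fin.cons i j) * ∏ t, π (j t) = d)
    (μ : Fin r → ℝ) (φ : Fin r → Fin r → ℝ)
    (heig : ∀ k, (Q m r π p).mulVec (φ k) = μ k • φ k)
    (horth : ∀ k l, ∑ t, π t * φ k t * φ l t = if k = l then (1 : ℝ) else 0) :
    -- (1)
    (∀ ψ ψ' : Fin r → ℝ,
        ∑ i, π i * Q3app m r π p ψ ψ' i =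
          ψ ⬝ᵥ (Matrix.diagonal π * Q m r π p).mulVec ψ') ∧
    -- (2)
    (∀ i j : Fin r,
        (∑ t, π t * Q3app m r π p (φ i) (φ j) t =
          μ i * (if i = j then (1 : ℝ) else 0)) ∧
        (∀ s : ℕ,
          ∑ t, π t * ((Q m r π p) ^ s).mulVec (yVec m r π p (φ i) (φ j)) t =
            (d ^ (s + 1) + ((((m : ℝ) + 3) - 2) * d ^ s * μ i)) *
              (if i = j then (1 : ℝ) else 0))) ∧
    -- (3)
    (∀ i j : Fin r, μ i ≠ 0 → d / ((((m : ℝ) + 3) - 1) * μ i ^ 2) ≠ 1 → ∀ t : ℕ,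
        ((((m : ℝ) + 3) - 1) ^ 2 * μ i * μ j) ^ t * (∑ k, π k * φ i k * φ j k) +
          ∑ s ∈ Finset.range t,
            ((((m : ℝ) + 3) - 1) ^ 2 * μ i * μ j) ^ t *
              (((((m : ℝ) + 3) - 1) * μ i * μ j) ^ (s + 1))⁻¹ *
              (∑ k, π k * ((Q m r π p) ^ s).mulVec (yVec m r π p (φ i) (φ j)) k) =
        ((((m : ℝ) + 3) - 1) * μ i) ^ (2 * t) * gamma m d (μ i) t *
          (if i = j then (1 : ℝ) else 0)) := by
  have hpQ3 : ∀ j k, ∑ i, π i * Q3 m r π p i j k = π j * Q m r π p j k := by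
    intro j k
    unfold Q3 Q
    rw [aux_sum_cons m r π (fun l => p (Fin.cons j (Fin.cons k l))), Finset.mul_sum,
      Finset.mul_sum]
    refine Finset.sum_congr rfl fun i _ => ?_
    have : ∀ l : Fin m → Fin r, p (Fin.cons i (Fin.cons j (Fin.cons k l))) =
        p (Fin.cons j (Fin.cons k (Fin.cons i l))) := fun l => by
      rw [aux_swap01 m r p hsym, aux_swap12 m r p hsym]
    simp only [this]
    ring
  have hpQ : ∀ j, ∑ i, π i * Q m r π p i j = d * π j := by
    intro j
    unfold Q
    rw [← hdeg j, aux_sum_cons (m + 1) r π (fun l => p (Fin.cons j l)), Finset.sum_mul]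
    refine Finset.sum_congr rfl fun i _ => ?_
    simp only [aux_swap01 m r p hsym i j]
    ring
  have hv : π ᵥ* Q m r π p = d • π := by
    funext j
    simpa [Matrix.vecMul, dotProduct] using hpQ j
  have hvs : ∀ s : ℕ, π ᵥ* (Q m r π p) ^ s = d ^ s • π := by
    intro s
    induction s with
    | zero => simp
    | succ n ih => rw [pow_succ, ← Matrix.vecMul_vecMul, ih, Matrix.smul_vecMul, hv, smul_smul,
        pow_succ]
  have h1 : ∀ ψ ψ' : Fin r → ℝ,
        ∑ i, π i * Q3app m r π p ψ ψ' i =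
          ψ ⬝ᵥ (Matrix.diagonal π * Q m r π p).mulVec ψ' := by
    intro ψ ψ'
    have e1 : ∑ i, π i * Q3app m r π p ψ ψ' i =
        ∑ j, ∑ k, (∑ i, π i * Q3 m r π p i j k) * ψ j * ψ' k := by
      unfold Q3app
      simp only [Finset.mul_sum, Finset.sum_mul]
      rw [Finset.sum_comm]
      refine Finset.sum_congr rfl fun j _ => ?_
      rw [Finset.sum_comm]
      refine Finset.sum_congr rfl fun k _ => ?_
      refine Finset.sum_congr rfl fun i _ => ?_
      ring
    rw [e1]
    simp only [hpQ3, dotProduct, Matrix.mulVec, Matrix.diagonal_mul, Finset.mul_sum]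
    refine Finset.sum_congr rfl fun j _ => Finset.sum_congr rfl fun k _ => ?_
    ring
  have h2 : ∀ i j : Fin r, ∑ t, π t * Q3app m r π p (φ i) (φ j) t =
          μ i * (if i = j then (1 : ℝ) else 0) := by
    intro i j
    rw [h1, ← Matrix.mulVec_mulVec, heig]
    have e : φ i ⬝ᵥ (Matrix.diagonal π).mulVec (μ j • φ j) = μ j * ∑ t, π t * φ i t * φ j t := by
      simp only [dotProduct, Matrix.mulVec_diagonal, Finset.mul_sum, Pi.smul_apply, smul_eq_mul]
      refine Finset.sum_congr rfl fun k _ => ?_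
      ring
    rw [e, horth]
    by_cases h : i = j
    · rw [h]
    · simp [h]
  have h3 : ∀ (i j : Fin r) (s : ℕ),
          ∑ t, π t * ((Q m r π p) ^ s).mulVec (yVec m r π p (φ i) (φ j)) t =
            (d ^ (s + 1) + ((((m : ℝ) + 3) - 2) * d ^ s * μ i)) *
              (if i = j then (1 : ℝ) else 0) := by
    intro i j s
    have e1 : ∑ t, π t * ((Q m r π p) ^ s).mulVec (yVec m r π p (φ i) (φ j)) t =
        d ^ s * ∑ t, π t * yVec m r π p (φ i) (φ j) t := by
      change π ⬝ᵥ ((Q m r π p) ^ s).mulVec (yVec m r π p (φ i) (φ j)) = _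
      rw [Matrix.dotProduct_mulVec, hvs, smul_dotProduct]
      rfl
    have e2 : ∑ t, π t * (Q m r π p).mulVec (fun j' => φ i j' * φ j j') t =
        d * (if i = j then (1 : ℝ) else 0) := by
      change π ⬝ᵥ (Q m r π p).mulVec (fun j' => φ i j' * φ j j') = _
      rw [Matrix.dotProduct_mulVec, hv, smul_dotProduct, ← horth]
      simp [dotProduct, mul_assoc]
    have e3 : ∑ t, π t * yVec m r π p (φ i) (φ j) t =
        d * (if i = j then (1 : ℝ) else 0) +
          (((m : ℝ) + 3) - 2) * (μ i * (if i = j then (1 : ℝ) else 0)) := by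
      rw [← e2, ← h2 i j, Finset.mul_sum, ← Finset.sum_add_distrib]
      refine Finset.sum_congr rfl fun k _ => ?_
      unfold yVec
      ring
    rw [e1, e3]
    ring
  refine ⟨h1, fun i j => ⟨h2 i j, h3 i j⟩, ?_⟩
  intro i j hμ hτ t
  have ha : (((m : ℝ) + 3) - 1) ≠ 0 := by
    have : (0 : ℝ) ≤ m := Nat.cast_nonneg m
    linarith
  simp only [h3, horth]
  by_cases h : i = j
  · subst h
    simp only [if_true, mul_one]
    unfold gamma
    rw [← aux_geom _ (μ i) d (((m : ℝ) + 3) - 2) ha hμ hτ t, mul_add, mul_one, Finset.mul_sum,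
      show ((((m : ℝ) + 3) - 1) ^ 2 * μ i * μ i) ^ t = ((((m : ℝ) + 3) - 1) * μ i) ^ (2 * t) by
        rw [pow_mul]; ring]
    simp only [mul_assoc]
  · simp [h]

end SignalMatrix17
end
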